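/- Let F₀ = ℚ(√5), u = (1+√5)/2, and λ ∈ O_{F₀} irreducible, totally positive, coprime to 2√5, with u₀λ ≡ −1 mod 4·O_{F₀} for some totally positive unit u₀. Then (−1/λ) = 1, (u/λ) = −1, and (u^τ/λ) = −1, where τ generates Gal(F₀/ℚ). -/

import Mathlib

open NumberField

/-- The ring `ℤ[u]`, `u² = 1 + u`. -/
abbrev ZPhi : Type := QuadraticAlgebra ℤ 1 1

open scoped NumberTheorySymbols

lemma jac_sq_mod {n : ℕ} {a y : ℤ} (h : (n : ℤ) ∣ y ^ 2 - a) : jacobiSym a n ≠ -1 := by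
  have : jacobiSym a n = jacobiSym (y ^ 2) n :=
    jacobiSym.mod_left' (Int.modEq_iff_dvd.2 h)
  rw [this, jacobiSym.pow_left]
  nlinarith [sq_nonneg (jacobiSym y n)]

lemma jac_neg_one_three {n : ℕ} (h : n % 4 = 3) : jacobiSym (-1) n = -1 := by
  rw [jacobiSym.at_neg_one (by rw [Nat.odd_iff]; omega)]
  exact ZMod.χ₄_nat_three_mod_four h

lemma jac_neg_one_one {n : ℕ} (h : n % 4 = 1) : jacobiSym (-1) n = 1 := by
  rw [jacobiSym.at_neg_one (by rw [Nat.odd_iff]; omega)]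
  exact ZMod.χ₄_nat_one_mod_four h

lemma int_nonresidue {c d x m : ℤ} (hcd : IsCoprime c d) (hc : 0 < c) (hc4 : c % 4 = 3)
    (hd : 4 ∣ d) (hN : 0 < c ^ 2 + c * d - d ^ 2)
    (h1 : c ^ 2 + c * d - d ^ 2 ∣ x ^ 2 - m) (h2 : c ^ 2 + c * d - d ^ 2 ∣ m * d + c) : False := by
  obtain ⟨N, hNe⟩ := Int.eq_ofNat_of_zero_le hN.le
  obtain ⟨C, rfl⟩ := Int.eq_ofNat_of_zero_le hc.le
  rw [hNe] at h1 h2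
  have hd0 : d ≠ 0 := by
    rintro rfl
    have := Int.isUnit_iff.1 (isCoprime_zero_right.1 hcd)
    omega
  have hCo : Odd C := by rw [Nat.odd_iff]; omega
  have hN4 : N % 4 = 1 := by
    obtain ⟨k, rfl⟩ := hd
    obtain ⟨j, hj⟩ : ∃ j : ℤ, (C : ℤ) = 4 * j + 3 := ⟨C / 4, by omega⟩
    have : (N : ℤ) = 4 * (4 * j ^ 2 + 6 * j + 2 + C * k - 4 * k ^ 2) + 1 := by
      rw [← hNe, hj]; ring
    omega
  have hNo : Odd N := by rw [Nat.odd_iff]; omega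
  have hdN : IsCoprime d (N : ℤ) := by
    rw [← hNe, show (C : ℤ) ^ 2 + C * d - d ^ 2 = C ^ 2 + d * (C - d) by ring]
    exact IsCoprime.add_mul_left_right (hcd.symm.pow_right) _
  have hCN : IsCoprime (N : ℤ) (C : ℤ) := by
    rw [← hNe, show (C : ℤ) ^ 2 + C * d - d ^ 2 = -d ^ 2 + C * (C + d) by ring]
    exact IsCoprime.add_mul_left_left (hcd.symm.pow_left.neg_left) _
  have key : jacobiSym (-1 * C * d) N ≠ -1 := by
    apply jac_sq_mod (y := x * d)
    obtain ⟨p, hp⟩ := h1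
    obtain ⟨q, hq⟩ := h2
    exact ⟨p * d ^ 2 + d * q, by linear_combination d ^ 2 * hp + d * hq⟩
  apply key
  rw [jacobiSym.mul_left, jacobiSym.mul_left, jac_neg_one_one hN4,
    ← jacobiSym.quadratic_reciprocity_one_mod_four hN4 hCo]
  have e1 : jacobiSym N C = -1 := by
    have : jacobiSym N C = jacobiSym (-1 * d ^ 2) C := by
      apply jacobiSym.mod_left'
      apply Int.ModEq.symm
      rw [Int.modEq_iff_dvd, ← hNe]
      exact ⟨C + d, by ring⟩
    rw [this, jacobiSym.mul_left, jacobiSym.sq_one' (Int.isCoprime_iff_gcd_eq_one.1 hcd.symm),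
      jac_neg_one_three (by omega)]
    rfl
  have e2 : jacobiSym d N = 1 := by
    obtain ⟨e, D, hD, hdD⟩ := Nat.exists_eq_two_pow_mul_odd (n := d.natAbs) (by omega)
    have hDd : (D : ℤ) ∣ d := by
      rw [← Int.dvd_natAbs, hdD]; push_cast; exact dvd_mul_left _ _
    have hJD : jacobiSym D N = 1 := by
      rw [← jacobiSym.quadratic_reciprocity_one_mod_four hN4 hD]
      have : jacobiSym N D = jacobiSym (C ^ 2) D := by
        apply jacobiSym.mod_left'
        apply Int.ModEq.symm
        rw [Int.modEq_iff_dvd, ← hNe]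
        exact hDd.trans ⟨C - d, by ring⟩
      rw [this]
      exact jacobiSym.sq_one' (Int.isCoprime_iff_gcd_eq_one.1 (hcd.of_isCoprime_of_dvd_right hDd))
    have he : 2 ≤ e := by
      by_contra hlt
      have h4 : 4 ∣ d.natAbs := by omega
      rw [hdD] at h4
      have : e = 0 ∨ e = 1 := by omega
      rcases this with rfl | rfl
      · rw [Nat.odd_iff] at hD; omega
      · rw [Nat.odd_iff] at hD; omega
    have h2 : jacobiSym (2 ^ e) N = 1 := by
      rw [jacobiSym.pow_left]
      rcases Nat.lt_or_ge 2 e with h3 | h3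
      · have h8 : (8 : ℤ) ∣ d := by
          rw [← Int.dvd_natAbs, hdD]
          push_cast
          exact Dvd.dvd.mul_right (pow_dvd_pow 2 h3) _
        have hN8 : N % 8 = 1 := by
          obtain ⟨k, rfl⟩ := h8
          obtain ⟨j, hj⟩ := hCo
          obtain ⟨i, hi⟩ := Int.even_mul_succ_self (j : ℤ)
          have : (N : ℤ) = 8 * (i + C * k - 8 * k ^ 2) + 1 := by
            rw [← hNe, hj]; push_cast; linear_combination 4 * hi
          omega
        rw [jacobiSym.at_two hNo, ZMod.χ₈_nat_eq_if_mod_eight, if_neg (by omega), if_pos (by omega)]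
        simp
      · have : e = 2 := by omega
        subst this
        rw [jacobiSym.sq_one]
        rw [← Int.isCoprime_iff_gcd_eq_one]
        exact hdN.of_isCoprime_of_dvd_left ((by norm_num : (2 : ℤ) ∣ 4).trans hd)
    have h3 : jacobiSym d.natAbs N = 1 := by
      rw [hdD]; push_cast
      rw [jacobiSym.mul_left, h2, hJD]; rfl
    rcases Int.natAbs_eq d with h | h
    · rw [h]; exact h3
    · rw [h, ← neg_one_mul, jacobiSym.mul_left, jac_neg_one_one hN4, h3]; rfl
  rw [e1, e2]; rfl

open QuadraticAlgebra in
lemma zphi_norm (z : ZPhi) : z.norm = z.re ^ 2 + z.re * z.im - z.im ^ 2 := by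
  rw [QuadraticAlgebra.norm_def]; ring

lemma zphi_norm_eq_zero {z : ZPhi} (h : z.norm = 0) : z = 0 := by
  rw [zphi_norm] at h
  have h5 : (2 * z.re + z.im) ^ 2 = 5 * z.im ^ 2 := by linear_combination 4 * h
  have him : z.im = 0 := by
    by_contra hne
    have hq : ((2 * z.re + z.im : ℤ) / (z.im : ℤ) : ℚ) ^ 2 = (5 : ℕ) := by
      have : (z.im : ℚ) ≠ 0 := by exact_mod_cast hne
      rw [div_pow, div_eq_iff (by positivity)]
      exact_mod_cast h5
    have hirr := Nat.Prime.irrational_sqrt (p := 5) (by norm_num)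
    apply hirr
    refine ⟨|((2 * z.re + z.im : ℤ) / (z.im : ℤ) : ℚ)|, ?_⟩
    rw [← Real.sqrt_sq_eq_abs _ |>.trans (Rat.cast_abs _).symm]
    congr 1
    exact_mod_cast hq
  rw [him] at h5
  have hre : z.re = 0 := by
    have : z.re ^ 2 = 0 := by linarith
    exact pow_eq_zero_iff (two_ne_zero) |>.1 this
  ext <;> simp [him, hre]

lemma exists_near (x n : ℤ) (hn : n ≠ 0) : ∃ q : ℤ, 4 * (x - n * q) ^ 2 ≤ n ^ 2 := by
  refine ⟨round ((x : ℚ) / n), ?_⟩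
  have h := abs_sub_round ((x : ℚ) / n)
  set q := round ((x : ℚ) / n)
  have hn' : (n : ℚ) ≠ 0 := by exact_mod_cast hn
  have h2 : ((x : ℚ) / n - q) ^ 2 ≤ (1 / 2) ^ 2 := sq_le_sq' (by linarith [abs_le.1 h]) (abs_le.1 h).2
  have h3 : ((x : ℚ) - n * q) = n * ((x : ℚ) / n - q) := by field_simp
  have : (4 : ℚ) * (x - n * q) ^ 2 ≤ n ^ 2 := by
    rw [h3, mul_pow]
    nlinarith [sq_nonneg (n : ℚ)]
  exact_mod_cast this

lemma exists_quot (x y : ZPhi) : ∃ q : ZPhi, (y = 0 → q = 0) ∧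
    (y ≠ 0 → (x - y * q).norm.natAbs < y.norm.natAbs) := by
  by_cases hy : y = 0
  · exact ⟨0, by simp, by simp [hy]⟩
  have hn : y.norm ≠ 0 := fun h => hy (zphi_norm_eq_zero h)
  obtain ⟨q1, h1⟩ := exists_near (x * star y).re y.norm hn
  obtain ⟨q2, h2⟩ := exists_near (x * star y).im y.norm hn
  refine ⟨⟨q1, q2⟩, by simp [hy], fun _ => ?_⟩
  set r := x - y * ⟨q1, q2⟩ with hr
  have hrs : r * star y = x * star y - (y.norm : ZPhi) * ⟨q1, q2⟩ := by
    have : (y.norm : ZPhi) = y * star y := by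
      rw [← QuadraticAlgebra.algebraMap_norm_eq_mul_star]; rfl
    rw [this, hr]; ring
  have hre : (r * star y).re = (x * star y).re - y.norm * q1 := by
    rw [hrs]; simp
  have him : (r * star y).im = (x * star y).im - y.norm * q2 := by
    rw [hrs]; simp
  have hnm : (r * star y).norm = r.norm * y.norm := by
    rw [map_mul, QuadraticAlgebra.norm_star]
  rw [← hre] at h1
  rw [← him] at h2
  rw [zphi_norm] at hnm
  generalize (r * star y).re = s at *
  generalize (r * star y).im = t at *
  have hpos : 0 < y.norm ^ 2 := by positivity
  rw [← Int.ofNat_lt, Int.natCast_natAbs, Int.natCast_natAbs]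
  have hy0 : 0 < |y.norm| := abs_pos.2 hn
  by_contra hlt
  push Not at hlt
  have : |y.norm| * |y.norm| ≤ |r.norm * y.norm| := by
    rw [abs_mul]; exact mul_le_mul_of_nonneg_right hlt hy0.le
  rw [abs_mul_abs_self, ← hnm] at this
  rcases abs_cases (s ^ 2 + s * t - t ^ 2) with h | h
  · nlinarith [sq_nonneg (s - t), sq_nonneg (s + t)]
  · nlinarith [sq_nonneg (s - t), sq_nonneg (s + t)]

noncomputable abbrev zphiEuclidean : EuclideanDomain ZPhi :=
  { (inferInstance : CommRing ZPhi), (inferInstance : Nontrivial ZPhi) with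
    quotient := fun x y => (exists_quot x y).choose
    quotient_zero := fun x => (exists_quot x 0).choose_spec.1 rfl
    remainder := fun x y => x - y * (exists_quot x y).choose
    quotient_mul_add_remainder_eq := fun x y => by ring
    r := fun x y => x.norm.natAbs < y.norm.natAbs
    r_wellFounded := (measure fun x : ZPhi => x.norm.natAbs).wf
    remainder_lt := fun x y hy => (exists_quot x y).choose_spec.2 hy
    mul_left_not_lt := fun x y hy => by
      rw [map_mul, Int.natAbs_mul, not_lt]
      apply Nat.le_mul_of_pos_right
      exact Int.natAbs_pos.2 fun h => hy (zphi_norm_eq_zero h) }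

instance zphiDomain : IsDomain ZPhi := zphiEuclidean.instIsDomain

instance zphiPID : IsPrincipalIdealRing ZPhi :=
  @EuclideanDomain.to_principal_ideal_domain ZPhi zphiEuclidean

lemma zphi_neg_one {l : ZPhi} (hl : Irreducible l) (hpos : 0 < l.norm) (h4 : l.norm % 4 = 1) :
    ∃ X : ZPhi, l ∣ X ^ 2 + 1 := by
  have hm : (Ideal.span {l}).IsMaximal := PrincipalIdealRing.isMaximal_of_irreducible hl
  let _ : Field (ZPhi ⧸ Ideal.span {l}) := Ideal.Quotient.field _
  have hcard : Nat.card (ZPhi ⧸ Ideal.span {l}) = l.norm.natAbs := by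
    rw [← Submodule.cardQuot_apply, ← Ideal.absNorm_apply, Ideal.absNorm_span_singleton]
    congr 1
    rw [Algebra.norm_apply, ← QuadraticAlgebra.det_toLinearMap_eq_norm]
    rfl
  have : Finite (ZPhi ⧸ Ideal.span {l}) := Nat.finite_of_card_ne_zero (by omega)
  let _ := Fintype.ofFinite (ZPhi ⧸ Ideal.span {l})
  have : IsSquare (-1 : ZPhi ⧸ Ideal.span {l}) := by
    rw [FiniteField.isSquare_neg_one_iff, ← Nat.card_eq_fintype_card, hcard]
    omega
  obtain ⟨x, hx⟩ := this
  obtain ⟨X, rfl⟩ := Ideal.Quotient.mk_surjective x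
  refine ⟨X, ?_⟩
  rw [← Ideal.mem_span_singleton, ← Ideal.Quotient.eq_zero_iff_mem, map_add, map_pow, map_one, sq, ← hx]
  simp

lemma zphi_prim_nonres {c d : ℤ} (hcd : IsCoprime c d) (hc : 0 < c) (hc4 : c % 4 = 3)
    (hd : 4 ∣ d) (hN : 0 < c ^ 2 + c * d - d ^ 2) (X : ZPhi)
    (hX : (⟨c, d⟩ : ZPhi) ∣ X ^ 2 - ⟨0, 1⟩) : False := by
  have hdN : IsCoprime d (c ^ 2 + c * d - d ^ 2) := by
    rw [show c ^ 2 + c * d - d ^ 2 = c ^ 2 + d * (c - d) by ring]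
    exact IsCoprime.add_mul_left_right (hcd.symm.pow_right) _
  obtain ⟨α, β, hαβ⟩ := hdN
  have hmd : (-(c * α)) * d + c = (c ^ 2 + c * d - d ^ 2) * (c * β) := by
    linear_combination (-c) * hαβ
  set m : ℤ := -(c * α)
  have hw : (⟨c, d⟩ : ZPhi) ∣ ⟨-m, 1⟩ := by
    have hn : (⟨c, d⟩ : ZPhi) ∣ ((c ^ 2 + c * d - d ^ 2 : ℤ) : ZPhi) := by
      refine ⟨⟨c + d, -d⟩, ?_⟩
      ext
      · rw [QuadraticAlgebra.re_intCast, QuadraticAlgebra.re_mul]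
        simp only [Int.cast_id]
        ring
      · rw [QuadraticAlgebra.im_intCast, QuadraticAlgebra.im_mul]
        simp only
        ring
    have h1 : (d : ZPhi) * ⟨-m, 1⟩ = ⟨c, d⟩ - ((c ^ 2 + c * d - d ^ 2 : ℤ) : ZPhi) * (c * β : ℤ) := by
      rw [← Int.cast_mul, ← hmd]
      ext <;> simp <;> ring
    have h2 : (⟨-m, 1⟩ : ZPhi) = (α : ZPhi) * ((d : ZPhi) * ⟨-m, 1⟩) +
        ((c ^ 2 + c * d - d ^ 2 : ℤ) : ZPhi) * ((β : ZPhi) * ⟨-m, 1⟩) := by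
      have := congrArg (Int.cast : ℤ → ZPhi) hαβ
      rw [Int.cast_add, Int.cast_mul, Int.cast_mul, Int.cast_one] at this
      linear_combination (-(⟨-m, 1⟩ : ZPhi)) * this
    rw [h2, h1]
    exact dvd_add ((dvd_sub dvd_rfl (hn.mul_right _)).mul_left _) (hn.mul_right _)
  obtain ⟨Y, hY⟩ : (⟨c, d⟩ : ZPhi) ∣ (((X.re + X.im * m) ^ 2 - m : ℤ) : ZPhi) := by
    have h1 : (⟨c, d⟩ : ZPhi) ∣ X - ((X.re + X.im * m : ℤ) : ZPhi) := by
      refine hw.trans ⟨(X.im : ZPhi), ?_⟩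
      ext <;> simp <;> ring
    have h2 : (((X.re + X.im * m) ^ 2 - m : ℤ) : ZPhi) = (X ^ 2 - ⟨0, 1⟩) + ⟨-m, 1⟩
        - (X - ((X.re + X.im * m : ℤ) : ZPhi)) * (X + ((X.re + X.im * m : ℤ) : ZPhi)) := by
      have : (⟨-m, 1⟩ : ZPhi) = ⟨0, 1⟩ - (m : ZPhi) := by ext <;> simp
      rw [this]; push_cast; ring
    rw [h2]
    exact dvd_sub (dvd_add hX hw) (h1.mul_right _)
  refine int_nonresidue hcd hc hc4 hd hN (x := X.re + X.im * m) (m := m) ?_ ⟨_, hmd⟩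
  set k := (X.re + X.im * m) ^ 2 - m
  have e1 := congrArg QuadraticAlgebra.re hY
  have e2 := congrArg QuadraticAlgebra.im hY
  simp at e1 e2
  obtain ⟨p, q, hpq⟩ := hcd
  -- N * Y.re = k (c + d),  N * Y.im = - k d
  refine ⟨p * (Y.re + Y.im) - q * Y.im, ?_⟩
  linear_combination (-k) * hpq + (p * c + q * d) * e1 + (p * (c - d) - q * c) * e2

open scoped QuadraticAlgebra in
lemma zphi_nonres {l : ZPhi} (hre : 0 < l.re) (hpos : 0 < l.norm) (h4 : (4 : ZPhi) ∣ l + 1)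
    (X : ZPhi) (hX : l ∣ X ^ 2 - ⟨0, 1⟩) : False := by
  obtain ⟨w, hw⟩ := h4
  have w1 := congrArg QuadraticAlgebra.re hw
  have w2 := congrArg QuadraticAlgebra.im hw
  simp at w1 w2
  have hg0 : 0 < Int.gcd l.re l.im := Int.gcd_pos_of_ne_zero_left _ hre.ne'
  obtain ⟨g, c, d, hg, hcop, hc, hd⟩ : ∃ (g : ℕ) (c d : ℤ), 0 < g ∧ IsCoprime c d ∧
      l.re = g * c ∧ l.im = g * d := by
    obtain ⟨c, d, h1, h2, h3⟩ := Int.exists_gcd_one hg0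
    exact ⟨_, c, d, hg0, Int.isCoprime_iff_gcd_eq_one.2 h1, by rw [mul_comm]; exact h2, by rw [mul_comm]; exact h3⟩
  have hl : l = (g : ZPhi) * ⟨c, d⟩ := by ext <;> simp [hc, hd]
  have hc0 : 0 < c := by
    rw [hc] at hre
    exact pos_of_mul_pos_right hre (by positivity)
  rw [hc] at w1
  rw [hd] at w2
  have hgo : g % 4 = 1 ∨ g % 4 = 3 := by
    by_contra hne
    obtain ⟨k, hk⟩ : ∃ k, g = 2 * k := ⟨g / 2, by omega⟩
    have : (2 : ℤ) * (k * c) + 1 = 4 * w.re := by rw [← w1, hk]; push_cast; ring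
    omega
  rcases hgo with hg1 | hg3
  · obtain ⟨k, hk⟩ : ∃ k, g = 4 * k + 1 := ⟨g / 4, by omega⟩
    have a1 : 4 * (k * c) + c + 1 = 4 * w.re := by rw [← w1, hk]; push_cast; ring
    have a2 : 4 * (k * d) + d = 4 * w.im := by rw [← w2, hk]; push_cast; ring
    refine zphi_prim_nonres hcop hc0 (by omega) (by omega) ?_ X ((Dvd.intro_left _ hl.symm).trans hX)
    have : l.norm = (g : ℤ) ^ 2 * (c ^ 2 + c * d - d ^ 2) := by
      rw [zphi_norm, hc, hd]; ring
    rw [this] at hpos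
    exact pos_of_mul_pos_right hpos (by positivity)
  · obtain ⟨Z, hZ⟩ : (g : ZPhi) ∣ X ^ 2 - ⟨0, 1⟩ := (Dvd.intro _ hl.symm).trans hX
    refine jac_sq_mod (n := g) (a := -1) (y := X.norm) ?_ (jac_neg_one_three hg3)
    have hX2 : X ^ 2 = ⟨0, 1⟩ + (g : ZPhi) * Z := by rw [← hZ]; ring
    have : X.norm ^ 2 = (⟨g * Z.re, 1 + g * Z.im⟩ : ZPhi).norm := by
      rw [← map_pow, hX2]; congr 1; ext <;> simp
    rw [this, zphi_norm]
    refine ⟨g * Z.re ^ 2 + Z.re * (1 + g * Z.im) - (2 * Z.im + g * Z.im ^ 2), ?_⟩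
    simp only
    ring

instance qphiFact : Fact (∀ r : ℚ, r ^ 2 ≠ (1 : ℚ) + 1 * r) := ⟨fun r h => by
  have hirr := Nat.Prime.irrational_sqrt (p := 5) (by norm_num)
  apply hirr
  refine ⟨|2 * r - 1|, ?_⟩
  rw [← Real.sqrt_sq_eq_abs _ |>.trans (Rat.cast_abs _).symm]
  congr 1
  have : (2 * r - 1) ^ 2 = (5 : ℕ) := by push_cast; linear_combination 4 * h
  exact_mod_cast this⟩

/-- The field `ℚ(u)`. -/
abbrev QPhi : Type := QuadraticAlgebra ℚ 1 1

lemma rat_int_of_sq {s : ℚ} {n : ℤ} (h : 5 * s ^ 2 = n) : ∃ k : ℤ, s = k := by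
  have h1 : IsIntegral ℤ (5 * s) := by
    refine IsIntegral.of_pow (n := 2) (by norm_num) ?_
    rw [show (5 * s) ^ 2 = ((5 * n : ℤ) : ℚ) by push_cast; rw [← h]; ring]
    exact isIntegral_algebraMap (R := ℤ) (A := ℚ) (x := 5 * n)
  obtain ⟨k, hk⟩ := IsIntegrallyClosed.isIntegral_iff.1 h1
  have hk' : (k : ℚ) = 5 * s := hk
  have h2 : k ^ 2 = 5 * n := by
    have : (k : ℚ) ^ 2 = 5 * n := by rw [hk', ← h]; ring
    exact_mod_cast this
  have h5 : (5 : ℤ) ∣ k := by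
    have : Prime (5 : ℤ) := by norm_num
    exact this.dvd_of_dvd_pow ⟨n, h2⟩
  obtain ⟨j, rfl⟩ := h5
  exact ⟨j, by push_cast at hk'; linarith⟩

lemma qphi_integral {k : QPhi} (hk : IsIntegral ℤ k) : ∃ a b : ℤ, k = ⟨(a : ℚ), (b : ℚ)⟩ := by
  have hs : IsIntegral ℤ (star k) :=
    hk.map ((starRingEnd QPhi).toIntAlgHom)
  have hmap : ∀ x : ℚ, algebraMap ℚ QPhi x = ⟨x, 0⟩ := fun x => by
    rw [eq_ratCast]; rfl
  have h1 : IsIntegral ℤ (k.trace) := by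
    rw [← isIntegral_algebraMap_iff (A := ℚ) (B := QPhi) (algebraMap ℚ QPhi).injective,
      hmap, ← QuadraticAlgebra.algebraMap_eq, QuadraticAlgebra.algebraMap_trace_eq_add_star]
    exact hk.add hs
  have h2 : IsIntegral ℤ (k.norm) := by
    rw [← isIntegral_algebraMap_iff (A := ℚ) (B := QPhi) (algebraMap ℚ QPhi).injective,
      hmap, ← QuadraticAlgebra.algebraMap_eq, QuadraticAlgebra.algebraMap_norm_eq_mul_star]
    exact hk.mul hs
  obtain ⟨t, ht⟩ := IsIntegrallyClosed.isIntegral_iff.1 h1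
  obtain ⟨n, hn⟩ := IsIntegrallyClosed.isIntegral_iff.1 h2
  have ht : (t : ℚ) = 2 * k.re + 1 * k.im := ht
  have hn : (n : ℚ) = k.re * k.re + 1 * k.re * k.im - 1 * k.im * k.im := hn
  obtain ⟨b, hb⟩ := rat_int_of_sq (s := k.im) (n := t ^ 2 - 4 * n) (by
    push_cast; rw [ht, hn]; ring)
  have hpar : t ^ 2 - 5 * b ^ 2 = 4 * n := by
    have : (t : ℚ) ^ 2 - 5 * b ^ 2 = 4 * n := by rw [ht, hn, ← hb]; ring
    exact_mod_cast this
  have : ∃ a, t = 2 * a + b := by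
    rcases Int.even_or_odd' t with ⟨i, rfl | rfl⟩ <;> rcases Int.even_or_odd' b with ⟨j, rfl | rfl⟩
    · exact ⟨i - j, by ring⟩
    · ring_nf at hpar; omega
    · ring_nf at hpar; omega
    · exact ⟨i - j, by ring⟩
  obtain ⟨a, rfl⟩ := this
  refine ⟨a, b, ?_⟩
  ext
  · simp only
    push_cast at ht
    rw [← hb] at ht
    linarith
  · exact hb

section transfer

variable {F₀ : Type*} [Field F₀] [NumberField F₀]

lemma exists_field_equiv (sq5 : F₀) (h5 : sq5 ^ 2 = 5)
    (hgen : IntermediateField.adjoin ℚ {sq5} = ⊤) :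
    ∃ f : QPhi ≃ₐ[ℚ] F₀, ∀ z : QPhi, f z = (z.re : F₀) + (z.im : F₀) * ((1 + sq5) / 2) := by
  let f : QPhi →ₐ[ℚ] F₀ := QuadraticAlgebra.lift ⟨(1 + sq5) / 2, by
    simp only [one_smul]
    linear_combination h5 / 4⟩
  have hf : ∀ z : QPhi, f z = (z.re : F₀) + (z.im : F₀) * ((1 + sq5) / 2) := by
    intro z
    change z.re • (1 : F₀) + z.im • ((1 + sq5) / 2) = _
    simp [Algebra.smul_def]
  have hsurj : Function.Surjective f := by
    rw [← AlgHom.fieldRange_eq_top, eq_top_iff, ← hgen, IntermediateField.adjoin_le_iff,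
      Set.singleton_subset_iff]
    refine ⟨⟨-1, 2⟩, ?_⟩
    change f _ = _
    rw [hf]
    push_cast
    ring
  exact ⟨AlgEquiv.ofBijective f ⟨f.injective, hsurj⟩, hf⟩

lemma exists_ring_equiv (sq5 : F₀) (f : QPhi ≃ₐ[ℚ] F₀)
    (hf : ∀ z : QPhi, f z = (z.re : F₀) + (z.im : F₀) * ((1 + sq5) / 2))
    (u : 𝓞 F₀) (h5 : sq5 ^ 2 = 5) (hu : algebraMap (𝓞 F₀) F₀ u = (1 + sq5) / 2) :
    ∃ e : ZPhi ≃+* 𝓞 F₀, e ⟨0, 1⟩ = u ∧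
      ∀ z : ZPhi, algebraMap (𝓞 F₀) F₀ (e z) = f ⟨(z.re : ℚ), (z.im : ℚ)⟩ := by
  let g : ZPhi →ₐ[ℤ] 𝓞 F₀ := QuadraticAlgebra.lift ⟨u, by
    apply FaithfulSMul.algebraMap_injective (𝓞 F₀) F₀
    simp only [one_smul, map_mul, map_add, map_one, hu]
    linear_combination h5 / 4⟩
  have hg : ∀ z : ZPhi, g z = (z.re : 𝓞 F₀) + (z.im : 𝓞 F₀) * u := by
    intro z
    simp [g, QuadraticAlgebra.lift]
  have hgf : ∀ z : ZPhi, algebraMap (𝓞 F₀) F₀ (g z) = f ⟨(z.re : ℚ), (z.im : ℚ)⟩ := by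
    intro z
    rw [hg, hf, map_add, map_mul, hu, map_intCast, map_intCast]
    simp
  have hinj : Function.Injective g := by
    intro x y hxy
    have h := congrArg (algebraMap (𝓞 F₀) F₀) hxy
    rw [hgf, hgf] at h
    have h := f.injective h
    have a := congrArg QuadraticAlgebra.re h
    have b := congrArg QuadraticAlgebra.im h
    simp only [Int.cast_inj] at a b
    ext
    · exact_mod_cast a
    · exact_mod_cast b
  have hsurj : Function.Surjective g := by
    intro z
    have hz : IsIntegral ℤ (f.symm (algebraMap (𝓞 F₀) F₀ z)) :=
      (RingOfIntegers.isIntegral_coe z).map (f.symm.toAlgHom.restrictScalars ℤ)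
    obtain ⟨a, b, hab⟩ := qphi_integral hz
    refine ⟨⟨a, b⟩, ?_⟩
    apply FaithfulSMul.algebraMap_injective (𝓞 F₀) F₀
    rw [hgf, ← hab, AlgEquiv.apply_symm_apply]
  refine ⟨RingEquiv.ofBijective g ⟨hinj, hsurj⟩, ?_, hgf⟩
  change g _ = u
  rw [hg]; simp

lemma zphi_pos (f : QPhi ≃ₐ[ℚ] F₀) (z : ZPhi)
    (h : ∀ φ : F₀ →+* ℝ, 0 < φ (f ⟨(z.re : ℚ), (z.im : ℚ)⟩)) : 0 < z.re ∧ 0 < z.norm := by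
  have key : ∀ x : ℝ, x ^ 2 = x + 1 → 0 < (z.re : ℝ) + z.im * x := by
    intro x hx
    let g : QPhi →ₐ[ℚ] ℝ := QuadraticAlgebra.lift ⟨x, by
      simp only [one_smul]
      linear_combination hx⟩
    have := h (g.toRingHom.comp f.symm.toRingEquiv.toRingHom)
    have h2 : g (f.symm (f ⟨(z.re : ℚ), (z.im : ℚ)⟩)) = (z.re : ℝ) + z.im * x := by
      rw [AlgEquiv.symm_apply_apply]
      change (z.re : ℚ) • (1 : ℝ) + (z.im : ℚ) • x = _
      simp [Algebra.smul_def]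
    rw [← h2]
    exact this
  have h1 := key _ Real.goldenRatio_sq
  have h2 := key _ Real.goldenConj_sq
  have hp := Real.goldenRatio_pos
  have hq := Real.goldenConj_neg
  have hs := Real.goldenRatio_add_goldenConj
  have hm := Real.goldenRatio_mul_goldenConj
  constructor
  · by_contra hle
    have hle : (z.re : ℝ) ≤ 0 := by exact_mod_cast not_lt.1 hle
    have b1 : 0 < (z.im : ℝ) := pos_of_mul_pos_left (by linarith) hp.le
    nlinarith
  · have := mul_pos h1 h2
    have e : ((z.norm : ℤ) : ℝ) = (z.re + z.im * Real.goldenRatio) * (z.re + z.im * Real.goldenConj) := by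
      rw [zphi_norm]; push_cast
      linear_combination (-(z.re * z.im : ℝ)) * hs - (z.im : ℝ) ^ 2 * hm
    rw [← e] at this
    exact_mod_cast this

end transfer

set_option synthInstance.maxHeartbeats 1000000 in
/-- Let `F₀ = ℚ(√5)`, `u = (1+√5)/2`, and `λ ∈ 𝓞 F₀` irreducible, totally
positive, coprime to `2√5`, with `u₀·λ ≡ −1 mod 4·𝓞 F₀` for some totally
positive unit `u₀`.  Then `(−1/λ) = 1`, `(u/λ) = −1`, and `(u^τ/λ) = −1`
(for `λ` prime the symbol is `1` exactly when the argument is a square modulo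
`λ`), where `u^τ = (1−√5)/2` and `τ` generates `Gal(F₀/ℚ)`. -/
theorem residue_symbols_of_units_sqrt5
    (F₀ : Type*) [Field F₀] [NumberField F₀]
    (sq5 : F₀) (h5 : sq5 ^ 2 = 5)
    (hgen : IntermediateField.adjoin ℚ {sq5} = ⊤)
    (s5 u uτ : 𝓞 F₀)
    (hs5 : algebraMap (𝓞 F₀) F₀ s5 = sq5)
    (hu : algebraMap (𝓞 F₀) F₀ u = (1 + sq5) / 2)
    (huτ : algebraMap (𝓞 F₀) F₀ uτ = (1 - sq5) / 2)
    (lam : 𝓞 F₀) (hirr : Irreducible lam)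
    (hpos : ∀ φ : F₀ →+* ℝ, 0 < φ (algebraMap (𝓞 F₀) F₀ lam))
    (hcop : IsCoprime lam (2 * s5))
    (hcong : ∃ u₀ : (𝓞 F₀)ˣ,
        (∀ φ : F₀ →+* ℝ, 0 < φ (algebraMap (𝓞 F₀) F₀ ↑u₀)) ∧
        (4 : 𝓞 F₀) ∣ ((↑u₀ : 𝓞 F₀) * lam + 1)) :
    -- `(−1/λ) = 1`: `−1` is a square modulo `λ`
    (∃ X : 𝓞 F₀, lam ∣ (X ^ 2 + 1)) ∧
    -- `(u/λ) = −1`: `u` is not a square modulo `λ`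
    (¬ ∃ X : 𝓞 F₀, lam ∣ (X ^ 2 - u)) ∧
    -- `(u^τ/λ) = −1`: `u^τ` is not a square modulo `λ`
    (¬ ∃ X : 𝓞 F₀, lam ∣ (X ^ 2 - uτ)) := by
  obtain ⟨u₀, hu₀, h4⟩ := hcong
  obtain ⟨f, hf⟩ := exists_field_equiv sq5 h5 hgen
  obtain ⟨e, heu, hef⟩ := exists_ring_equiv sq5 f hf u h5 hu
  obtain ⟨l, hl⟩ := e.surjective (↑u₀ * lam)
  have hassoc : Associated lam (e l) := ⟨u₀, by rw [hl, mul_comm]⟩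
  have hli : Irreducible l := by
    rw [← MulEquiv.irreducible_iff e]
    exact hassoc.irreducible hirr
  obtain ⟨hre, hnorm⟩ := zphi_pos f l (fun φ => by
    rw [← hef, hl, map_mul, map_mul]
    exact mul_pos (hu₀ φ) (hpos φ))
  have hl4 : (4 : ZPhi) ∣ l + 1 := by
    rw [← map_dvd_iff e, map_add, hl, map_one, map_ofNat]
    exact h4
  have hn4 : l.norm % 4 = 1 := by
    obtain ⟨w, hw⟩ := hl4
    have hlw : l = ⟨4 * w.re - 1, 4 * w.im⟩ := by
      have : l = 4 * w - 1 := by rw [← hw]; ring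
      rw [this]
      ext
      · change (4 * w).re - 1 = _
        simp [QuadraticAlgebra.re_ofNat, QuadraticAlgebra.im_ofNat]
      · change (4 * w).im - 0 = _
        simp [QuadraticAlgebra.re_ofNat, QuadraticAlgebra.im_ofNat]
    have : l.norm = 4 * (4 * w.re ^ 2 - 2 * w.re + (4 * w.re - 1) * w.im - 4 * w.im ^ 2) + 1 := by
      rw [zphi_norm, hlw]; ring
    omega
  obtain ⟨I, hI⟩ := zphi_neg_one hli hnorm hn4
  have hI' : lam ∣ (e I) ^ 2 + 1 := by
    rw [hassoc.dvd_iff_dvd_left]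
    have := map_dvd e hI
    rwa [map_add, map_pow, map_one] at this
  have hU : ¬ ∃ X : 𝓞 F₀, lam ∣ (X ^ 2 - u) := by
    rintro ⟨X, hX⟩
    obtain ⟨Y, rfl⟩ := e.surjective X
    apply zphi_nonres hre hnorm hl4 Y
    rw [← map_dvd_iff e, map_sub, map_pow, heu, ← hassoc.dvd_iff_dvd_left]
    exact hX
  refine ⟨⟨_, hI'⟩, hU, ?_⟩
  rintro ⟨Y, hY⟩
  have huu : u * uτ = -1 := by
    apply FaithfulSMul.algebraMap_injective (𝓞 F₀) F₀
    rw [map_mul, hu, huτ, map_neg, map_one]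
    linear_combination (-1 / 4 : F₀) * h5
  apply hU
  refine ⟨e I * u * Y, ?_⟩
  have : (e I * u * Y) ^ 2 - u = ((e I) ^ 2 + 1) * (u * Y) ^ 2 - u ^ 2 * (Y ^ 2 - uτ) := by
    linear_combination (-u) * huu
  rw [this]
  exact dvd_sub (hI'.mul_right _) (hY.mul_left _)
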